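/- Let ℵ_α be a regular infinite cardinal and assume UT(ℵ_α, ℵ_α, ℵ_α). If (P, ≤) is a partially ordered set whose underlying set is well-orderable, all antichains in P are finite, all chains in P have cardinality at most ℵ_α, and there exists at least one chain of cardinality ℵ_α, then P has cardinality ℵ_α. -/

import Mathlib

universe u

/-!
Join two elements of `P` when they are comparable: chains become cliques and antichains become
independent sets. The claim is then the Erdős–Dushnik–Miller relation `λ → (λ, ω)` for the regular
cardinal `λ = ℵ_α⁺`. Call a set of vertices large if it has at least `λ` elements. If every large
set `X` has a vertex with a large set of non-neighbours in `X`, shrinking `X` to that set again and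
again yields an infinite independent set. Otherwise some large `X` has all these sets of
non-neighbours small; a maximal clique of `X` is small too, and every other vertex of `X` is a
non-neighbour of one of its members, so `X` is a union of fewer than `λ` sets of size less than
`λ`, which contradicts regularity.
-/

section

open Cardinal

variable {V : Type u} {G : SimpleGraph V}

theorem exists_infinite_isClique_of_forall_exists_inter_neighborSet {Q : Set V → Prop} {X₀ : Set V}
    (hX₀ : Q X₀) (hQ : ∀ X, Q X → ∃ x ∈ X, Q (X ∩ G.neighborSet x)) :
    ∃ K : Set V, G.IsClique K ∧ K.Infinite := by
  have : Nonempty V := (hQ X₀ hX₀).nonempty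
  choose! g hg_mem hgQ using hQ
  let X (n : ℕ) : Set V := (fun Y ↦ Y ∩ G.neighborSet (g Y))^[n] X₀
  have X_succ (n : ℕ) : X (n + 1) = X n ∩ G.neighborSet (g (X n)) :=
    Function.iterate_succ_apply' _ n X₀
  have hX (n : ℕ) : Q (X n) := by
    induction n with
    | zero => exact hX₀
    | succ n ih => exact X_succ n ▸ hgQ _ ih
  have hX_anti : Antitone X :=
    antitone_nat_of_succ_le fun n ↦ (X_succ n).trans_subset Set.inter_subset_left
  have adj_of_lt (m n : ℕ) (hmn : m < n) : G.Adj (g (X m)) (g (X n)) := by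
    have hmem : g (X n) ∈ X (m + 1) := hX_anti hmn (hg_mem _ (hX n))
    rw [X_succ] at hmem
    exact hmem.2
  have := G.symm
  have hadj : Pairwise fun m n ↦ G.Adj (g (X m)) (g (X n)) :=
    (Std.Symm.pairwise_on fun n ↦ g (X n)).2 adj_of_lt
  have hinj : Function.Injective fun n ↦ g (X n) :=
    fun m n h ↦ by_contra fun hmn ↦ (hadj hmn).ne h
  exact ⟨_, hadj.range_pairwise, Set.infinite_range_of_injective hinj⟩

theorem exists_maximal_isClique_subset (G : SimpleGraph V) (X : Set V) :
    ∃ M, Maximal (fun K ↦ K ⊆ X ∧ G.IsClique K) M :=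
  zorn_subset {K | K ⊆ X ∧ G.IsClique K} fun c hc hchain ↦
    ⟨⋃₀ c, ⟨Set.sUnion_subset fun _ hK ↦ (hc hK).1,
      (Set.pairwise_sUnion hchain.directedOn).2 fun _ hK ↦ (hc hK).2⟩,
      fun _ ↦ Set.subset_sUnion_of_mem⟩

theorem subset_union_biUnion_inter_neighborSet_compl {X M : Set V}
    (hM : Maximal (fun K ↦ K ⊆ X ∧ G.IsClique K) M) :
    X ⊆ M ∪ ⋃ x ∈ M, X ∩ Gᶜ.neighborSet x := by
  intro y hy
  by_contra hcon
  simp only [Set.mem_union, Set.mem_iUnion, Set.mem_inter_iff, SimpleGraph.mem_neighborSet,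
    SimpleGraph.compl_adj, not_or, not_exists, not_and, not_not] at hcon
  obtain ⟨hyM, hadj⟩ := hcon
  have hclique : G.IsClique (insert y M) :=
    hM.prop.2.insert fun x hx hne ↦ (hadj x hx hy hne.symm).symm
  exact hyM (hM.mem_of_prop_insert ⟨Set.insert_subset hy hM.prop.1, hclique⟩)

theorem mk_lt_of_forall_mk_inter_neighborSet_compl_lt {κ : Cardinal.{u}} (hκ : κ.IsRegular)
    {X : Set V} (hclique : ∀ K ⊆ X, G.IsClique K → #K < κ)
    (hnbr : ∀ x ∈ X, #(X ∩ Gᶜ.neighborSet x : Set V) < κ) : #X < κ := by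
  obtain ⟨M, hM⟩ := exists_maximal_isClique_subset G X
  have hMκ : #M < κ := hclique M hM.prop.1 hM.prop.2
  have hunion : #(⋃ x ∈ M, X ∩ Gᶜ.neighborSet x : Set V) < κ :=
    (card_biUnion_lt_iff_forall_of_isRegular hκ hMκ).2 fun x hx ↦ hnbr x (hM.prop.1 hx)
  calc
    #X ≤ #(M ∪ ⋃ x ∈ M, X ∩ Gᶜ.neighborSet x : Set V) :=
      mk_le_mk_of_subset (subset_union_biUnion_inter_neighborSet_compl hM)
    _ ≤ #M + #(⋃ x ∈ M, X ∩ Gᶜ.neighborSet x : Set V) := mk_union_le _ _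
    _ < κ := add_lt_of_lt hκ.aleph0_le hMκ hunion

theorem mk_lt_of_isIndepSet_finite_of_mk_isClique_lt {κ : Cardinal.{u}} (hκ : κ.IsRegular)
    (hindep : ∀ A : Set V, G.IsIndepSet A → A.Finite)
    (hclique : ∀ K : Set V, G.IsClique K → #K < κ) : #V < κ := by
  by_contra! hV
  have hlarge (X : Set V) (hX : κ ≤ #X) : ∃ x ∈ X, κ ≤ #(X ∩ Gᶜ.neighborSet x : Set V) := by
    by_contra! hsmall
    exact hX.not_gt <|
      mk_lt_of_forall_mk_inter_neighborSet_compl_lt hκ (fun K _ ↦ hclique K) hsmall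
  obtain ⟨A, hA, hA_inf⟩ := exists_infinite_isClique_of_forall_exists_inter_neighborSet
    (Q := fun X ↦ κ ≤ #X) (mk_univ.symm ▸ hV) hlarge
  exact hA_inf (hindep A ((SimpleGraph.isClique_compl G).1 hA))

theorem isClique_fromRel_iff {r : V → V → Prop} {s : Set V} :
    (SimpleGraph.fromRel r).IsClique s ↔ IsChain r s :=
  forall₅_congr fun _ _ _ _ hne ↦ and_iff_right hne

theorem isIndepSet_fromRel_iff {r : V → V → Prop} {s : Set V} :
    (SimpleGraph.fromRel r).IsIndepSet s ↔ IsAntichain r s := by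
  refine ⟨fun h a ha b hb hne hab ↦ h ha hb hne ⟨hne, .inl hab⟩, fun h a ha b hb hne hadj ↦ ?_⟩
  exact hadj.2.elim (h ha hb hne) (h hb ha hne.symm)

theorem stmt2_general {κ : Cardinal.{u}} (hκ : ℵ₀ ≤ κ) {P : Type u} (r : P → P → Prop)
    (hanti : ∀ A : Set P, IsAntichain r A → A.Finite)
    (hchain : ∀ C : Set P, IsChain r C → #C ≤ κ)
    (hex : ∃ C : Set P, IsChain r C ∧ #C = κ) : #P = κ := by
  obtain ⟨C, -, hC⟩ := hex
  refine le_antisymm (Order.lt_succ_iff.1 ?_) (hC ▸ mk_set_le C)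
  exact mk_lt_of_isIndepSet_finite_of_mk_isClique_lt (G := .fromRel r) (isRegular_succ hκ)
    (fun A hA ↦ hanti A (isIndepSet_fromRel_iff.1 hA))
    (fun K hK ↦ Order.lt_succ_iff.2 (hchain K (isClique_fromRel_iff.1 hK)))

end

/-- If `ℵ_α` is a regular infinite cardinal and `UT(ℵ_α, ℵ_α, ℵ_α)` holds (the union
of a family of cardinality `ℵ_α` of sets each of cardinality `ℵ_α` has cardinality
`ℵ_α`), and `(P, ≤)` is a poset whose underlying set is well-orderable, all antichains
in `P` are finite, all chains in `P` have cardinality at most `ℵ_α`, and at least one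
chain has cardinality `ℵ_α`, then `P` has cardinality `ℵ_α`. -/
theorem stmt2 (α : Ordinal.{u}) (hreg : (Cardinal.aleph α).IsRegular)
    (hUT : ∀ (X : Type u) (A : Set (Set X)),
      Cardinal.mk A = Cardinal.aleph α →
      (∀ a ∈ A, Cardinal.mk a = Cardinal.aleph α) →
      Cardinal.mk (⋃₀ A) = Cardinal.aleph α)
    (P : Type u) [PartialOrder P]
    (hwo : ∃ r : P → P → Prop, IsWellOrder P r)
    (hanti : ∀ A : Set P, IsAntichain (· ≤ ·) A → A.Finite)
    (hchain : ∀ C : Set P, IsChain (· ≤ ·) C → Cardinal.mk C ≤ Cardinal.aleph α)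
    (hex : ∃ C : Set P, IsChain (· ≤ ·) C ∧ Cardinal.mk C = Cardinal.aleph α) :
    Cardinal.mk P = Cardinal.aleph α := by
  exact stmt2_general (Cardinal.aleph0_le_aleph α) (· ≤ ·) hanti hchain hex
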